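/- Let 𝔪 = (μ, γ) be a state-valued measure on separable complex Hilbert spaces 𝔥, ℋ, with Fourier transform 𝔪̂(η) = ∫_𝔥 e^{2i Re⟨η,z⟩} γ(z) dμ(z). Then 𝔪̂ is completely positive definite: for every finite collection η_1, …, η_J ∈ 𝔥 and 𝔱_1, …, 𝔱_J ∈ B(ℋ), the operator Σ_{j,k=1}^J 𝔱_j 𝔪̂(η_j − η_k) 𝔱_k* is a positive (nonnegative) operator on ℋ. -/

import Mathlib

noncomputable section
open MeasureTheory Complex
open scoped InnerProductSpace

variable {ℋ : Type*} [NormedAddCommGroup ℋ] [InnerProductSpace ℂ ℋ] [CompleteSpace ℋ]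

/-- The trace norm `‖T‖₁ = tr √(T*T)` computed in the Hilbert basis `e`. -/
def traceNorm {ι : Type*} (e : HilbertBasis ι ℂ ℋ) (T : ℋ →L[ℂ] ℋ) : ℝ :=
  ∑' i, (⟪e i, (CFC.sqrt (star T * T)) (e i)⟫_ℂ).re

/-- `T` is trace class: `tr √(T*T) < ∞`. -/
def IsTraceClass {ι : Type*} (e : HilbertBasis ι ℂ ℋ) (T : ℋ →L[ℂ] ℋ) : Prop :=
  Summable fun i => (⟪e i, (CFC.sqrt (star T * T)) (e i)⟫_ℂ).re

/-- A state-valued measure: a finite Borel measure `μ` on `𝔥` together with a trace-norm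
Bochner integrable map `γ` whose values are `μ`-a.e. positive trace-one operators on `ℋ`. -/
def IsStateValuedMeasure {𝔥 : Type*} [NormedAddCommGroup 𝔥] [InnerProductSpace ℂ 𝔥]
    [MeasurableSpace 𝔥] {ι : Type*} (e : HilbertBasis ι ℂ ℋ)
    (μ : Measure 𝔥) (γ : 𝔥 → (ℋ →L[ℂ] ℋ)) : Prop :=
  IsFiniteMeasure μ ∧ Integrable γ μ ∧ Integrable (fun z => traceNorm e (γ z)) μ ∧
  (∀ᵐ z ∂μ, (γ z).IsPositive) ∧
  (∀ᵐ z ∂μ, HasSum (fun i => (⟪e i, γ z (e i)⟫_ℂ).re) 1)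

/-- The Fourier transform `𝔪̂(η) = ∫ e^{2i Re⟨η,z⟩} γ(z) dμ(z)` of a state-valued measure. -/
def svmFourier {𝔥 : Type*} [NormedAddCommGroup 𝔥] [InnerProductSpace ℂ 𝔥]
    [MeasurableSpace 𝔥] (μ : Measure 𝔥) (γ : 𝔥 → (ℋ →L[ℂ] ℋ)) (η : 𝔥) : ℋ →L[ℂ] ℋ :=
  ∫ z, Complex.exp (2 * Complex.I * ((⟪η, z⟫_ℂ).re : ℂ)) • γ z ∂μ

/-!
At each point `z` the phase `e(-L(z, w_j - w_k))` splits as `c_j * conj c_k`, so the integrand of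
`Σ_{j,k} t_j f̂(w_j - w_k) t_k*` collapses to `V f(z) V*` with `V = Σ_j c_j t_j`. This is
nonnegative wherever `f(z)` is, and integration preserves the closed cone of nonnegative elements.
-/

/-- Complete positive definiteness of a function `F` from an additive group to an ordered
star-algebra `A`, where `0 ≤ a` plays the role of positivity of operators. Finite families in `G`
and `A` are indexed by `Fin J`. -/
def IsCompletelyPositiveDefinite {G A : Type*} [Sub G] [NonUnitalNonAssocSemiring A] [Star A]
    [LE A] (F : G → A) : Prop :=
  ∀ (J : ℕ) (η : Fin J → G) (t : Fin J → A),
    0 ≤ ∑ j, ∑ k, t j * F (η j - η k) * star (t k)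

theorem sum_sum_mul_smul_mul_star {ι R A : Type*} [Monoid R] [Star R]
    [NonUnitalNonAssocSemiring A] [StarAddMonoid A] [MulAction R A] [StarModule R A]
    [IsScalarTower R A A] [SMulCommClass R A A] (s : Finset ι) (c : ι → R) (t : ι → A) (a : A) :
    ∑ j ∈ s, ∑ k ∈ s, t j * ((c j * star (c k)) • a) * star (t k) =
      (∑ j ∈ s, c j • t j) * a * star (∑ k ∈ s, c k • t k) := by
  have term_eq (j k : ι) : t j * ((c j * star (c k)) • a) * star (t k) =
      (c j • t j) * a * star (c k • t k) := by
    rw [star_smul, mul_smul_comm, smul_mul_assoc, smul_mul_assoc, smul_mul_assoc, mul_smul_comm,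
      smul_smul]
  simp only [term_eq]
  rw [star_sum, Finset.sum_mul, Finset.sum_mul_sum]

theorem sum_sum_mul_integral_mul {X ι κ A : Type*} [MeasurableSpace X] {μ : Measure X}
    [NonUnitalNormedRing A] [NormedSpace ℝ A] [IsScalarTower ℝ A A] [SMulCommClass ℝ A A]
    {s : Finset ι} {s' : Finset κ} {F : ι → κ → X → A} (a : ι → A) (b : κ → A)
    (hF : ∀ j k, Integrable (F j k) μ) :
    ∑ j ∈ s, ∑ k ∈ s', a j * (∫ x, F j k x ∂μ) * b k =
      ∫ x, ∑ j ∈ s, ∑ k ∈ s', a j * F j k x * b k ∂μ := by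
  have hmul (j : ι) (k : κ) : Integrable (fun x => a j * F j k x) μ :=
    (ContinuousLinearMap.mul ℝ A (a j)).integrable_comp (hF j k)
  have hmul_mul (j : ι) (k : κ) : Integrable (fun x => a j * F j k x * b k) μ :=
    ((ContinuousLinearMap.mul ℝ A).flip (b k)).integrable_comp (hmul j k)
  rw [integral_finsetSum _ fun j _ => integrable_finsetSum _ fun k _ => hmul_mul j k]
  refine Finset.sum_congr rfl fun j _ => ?_
  rw [integral_finsetSum _ fun k _ => hmul_mul j k]
  refine Finset.sum_congr rfl fun k _ => ?_
  rw [integral_mul_const_of_integrable (hmul j k), integral_const_mul_of_integrable (hF j k)]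

theorem coe_addChar_sub {G : Type*} [AddGroup G] (e : AddChar G Circle) (x y : G) :
    (e (x - y) : ℂ) = e x * star (e y : ℂ) := by
  rw [sub_eq_add_neg, e.map_add_eq_mul, e.map_neg_eq_inv, Circle.coe_mul, Circle.coe_inv_eq_conj,
    star_def]

theorem isCompletelyPositiveDefinite_addChar_smul {G A : Type*} [AddGroup G] [NonUnitalSemiring A]
    [PartialOrder A] [StarRing A] [StarOrderedRing A] [MulAction ℂ A] [StarModule ℂ A]
    [IsScalarTower ℂ A A] [SMulCommClass ℂ A A] (e : AddChar G Circle) {a : A} (ha : 0 ≤ a) :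
    IsCompletelyPositiveDefinite fun x => e x • a := by
  intro J x t
  simp only [Circle.smul_def, coe_addChar_sub]
  rw [sum_sum_mul_smul_mul_star _ (fun j => (e (x j) : ℂ))]
  exact star_right_conjugate_nonneg ha _

namespace IsCompletelyPositiveDefinite

theorem comp_addMonoidHom {G H A : Type*} [AddGroup G] [AddGroup H] [NonUnitalNonAssocSemiring A]
    [Star A] [LE A] {F : G → A} (hF : IsCompletelyPositiveDefinite F) (ℓ : H →+ G) :
    IsCompletelyPositiveDefinite (F ∘ ℓ) := by
  intro J η t
  simpa only [Function.comp_apply, map_sub] using hF J (ℓ ∘ η) t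

theorem integral {X G A : Type*} [MeasurableSpace X] {μ : Measure X} [Sub G]
    [NonUnitalNormedRing A] [Star A] [NormedSpace ℝ A] [IsScalarTower ℝ A A] [SMulCommClass ℝ A A]
    [PartialOrder A] [IsOrderedAddMonoid A] [IsOrderedModule ℝ A] [ClosedIciTopology A]
    {F : X → G → A} (hF : ∀ᵐ x ∂μ, IsCompletelyPositiveDefinite (F x))
    (hF_int : ∀ g, Integrable (fun x => F x g) μ) :
    IsCompletelyPositiveDefinite fun g => ∫ x, F x g ∂μ := by
  intro J η t
  rw [sum_sum_mul_integral_mul t (fun k => star (t k)) fun j k => hF_int (η j - η k)]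
  exact integral_nonneg_of_ae (hF.mono fun x hx => hx J η t)

end IsCompletelyPositiveDefinite

theorem isCompletelyPositiveDefinite_fourierIntegral {𝕜 V W A : Type*} [CommRing 𝕜]
    [TopologicalSpace 𝕜] [IsTopologicalRing 𝕜] [AddCommGroup V] [Module 𝕜 V] [TopologicalSpace V]
    [MeasurableSpace V] [BorelSpace V] [AddCommGroup W] [Module 𝕜 W] [TopologicalSpace W]
    [NonUnitalCStarAlgebra A] [PartialOrder A] [StarOrderedRing A] {e : AddChar 𝕜 Circle}
    {μ : Measure V} {L : V →ₗ[𝕜] W →ₗ[𝕜] 𝕜} {f : V → A} (he : Continuous e)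
    (hL : Continuous fun p : V × W => L p.1 p.2) (hf : Integrable f μ) (hf_nonneg : 0 ≤ᵐ[μ] f) :
    IsCompletelyPositiveDefinite (VectorFourier.fourierIntegral e μ L f) := by
  refine IsCompletelyPositiveDefinite.integral ?_ fun w =>
    (VectorFourier.fourierIntegral_convergent_iff he hL w).2 hf
  filter_upwards [hf_nonneg] with v hv
  exact (isCompletelyPositiveDefinite_addChar_smul e hv).comp_addMonoidHom (-L v).toAddMonoidHom

section StateValuedMeasure

variable {𝔥 : Type*} [NormedAddCommGroup 𝔥] [InnerProductSpace ℂ 𝔥] [MeasurableSpace 𝔥]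

attribute [local instance] InnerProductSpace.complexToReal

-- The factor `-2` absorbs the sign in `VectorFourier.fourierIntegral`, whose phase is `e (-L v w)`.
theorem svmFourier_eq_fourierIntegral (μ : Measure 𝔥) (γ : 𝔥 → (ℋ →L[ℂ] ℋ)) :
    svmFourier μ γ =
      VectorFourier.fourierIntegral Real.probChar μ ((-2 : ℝ) • innerₗ 𝔥) γ := by
  funext η
  have phase_eq (z : 𝔥) : exp (2 * I * ((⟪η, z⟫_ℂ).re : ℂ)) =
      Real.probChar (-((-2 : ℝ) • innerₗ 𝔥) z η) := by
    have inner_eq : innerₗ 𝔥 z η = (⟪η, z⟫_ℂ).re := inner_re_symm (𝕜 := ℂ) z η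
    rw [Real.probChar_apply, LinearMap.smul_apply, LinearMap.smul_apply, inner_eq]
    push_cast [smul_eq_mul]
    ring_nf
  simp only [svmFourier, VectorFourier.fourierIntegral, Circle.smul_def, phase_eq]

theorem svmFourier_completely_positive_definite_general [BorelSpace 𝔥] {μ : Measure 𝔥}
    {γ : 𝔥 → (ℋ →L[ℂ] ℋ)} (hγ : Integrable γ μ) (hγ_pos : ∀ᵐ z ∂μ, (γ z).IsPositive) :
    IsCompletelyPositiveDefinite (svmFourier μ γ) := by
  have hγ_nonneg : 0 ≤ᵐ[μ] γ :=
    hγ_pos.mono fun z hz => (ContinuousLinearMap.nonneg_iff_isPositive _).2 hz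
  have continuous_pairing :
      Continuous fun p : 𝔥 × 𝔥 => ((-2 : ℝ) • innerₗ 𝔥) p.1 p.2 :=
    continuous_inner.const_smul (-2 : ℝ)
  rw [svmFourier_eq_fourierIntegral]
  exact isCompletelyPositiveDefinite_fourierIntegral Real.continuous_probChar continuous_pairing
    hγ hγ_nonneg

end StateValuedMeasure

/-- The Fourier transform of a state-valued measure is completely positive
definite: for all `η₁,…,η_J ∈ 𝔥` and `𝔱₁,…,𝔱_J ∈ B(ℋ)`, the operator
`Σ_{j,k} 𝔱_j 𝔪̂(η_j - η_k) 𝔱_k*` is positive. -/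
theorem svmFourier_completely_positive_definite
    {𝔥 : Type*} [NormedAddCommGroup 𝔥] [InnerProductSpace ℂ 𝔥] [CompleteSpace 𝔥]
    [MeasurableSpace 𝔥] [BorelSpace 𝔥] [SecondCountableTopology 𝔥]
    [SecondCountableTopology ℋ]
    {ι : Type*} (e : HilbertBasis ι ℂ ℋ)
    (μ : Measure 𝔥) (γ : 𝔥 → (ℋ →L[ℂ] ℋ))
    (hsvm : IsStateValuedMeasure e μ γ) :
    ∀ (J : ℕ) (η : Fin J → 𝔥) (𝔱 : Fin J → (ℋ →L[ℂ] ℋ)),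
      (∑ j : Fin J, ∑ k : Fin J,
        𝔱 j * svmFourier μ γ (η j - η k) * star (𝔱 k)).IsPositive := by
  obtain ⟨-, hγ, -, hγ_pos, -⟩ := hsvm
  exact fun J η 𝔱 => (ContinuousLinearMap.nonneg_iff_isPositive _).1
    (svmFourier_completely_positive_definite_general hγ hγ_pos J η 𝔱)
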